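/- arXiv:1008.3317 — 5 statements merged into one kernel-verified Lean document; each statement's English description precedes it below -/
import Mathlib

section
/- For all integers B ≥ 0, m ≥ 0 and every real μ with 0 < μ < 1, the generalized binomial probabilities sum to one: Σ_{j=0}^{2B+2m} p_j(2B, μ, m) = 1. -/
open Finset

/-- The Jacobi polynomial `P_m^{(α,β)}(x)` for integer parameters `α, β`
(with `m+α ≥ 0` and `m+β ≥ 0` in the intended range), defined by
`P_m^{(α,β)}(x) = ∑_{s=0}^{m} C(m+α, m−s) C(m+β, s) ((x−1)/2)^s ((x+1)/2)^{m−s}`. -/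
noncomputable def jacobiP (m : ℕ) (α β : ℤ) (x : ℝ) : ℝ :=
  ∑ s ∈ Finset.range (m + 1),
    (((m + α).toNat.choose (m - s) : ℝ)) * (((m + β).toNat.choose s : ℝ)) *
      ((x - 1) / 2) ^ s * ((x + 1) / 2) ^ (m - s)

/-- The generalized binomial probability
`p_j(2B, μ, m) = (m!(2B+m)!)/(j!(2B+2m−j)!) μ^{j−m} (1−μ)^{2B+m−j} (P_m^{(j−m,2B+m−j)}(1−2μ))²`,
where the powers of `μ` and `1−μ` are integer (possibly negative) powers. -/
noncomputable def genBinomP (B m : ℕ) (μ : ℝ) (j : ℕ) : ℝ :=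
  ((m.factorial * (2 * B + m).factorial : ℕ) : ℝ)
      / ((j.factorial * (2 * B + 2 * m - j).factorial : ℕ) : ℝ)
    * μ ^ ((j : ℤ) - (m : ℤ)) * (1 - μ) ^ ((2 * B + m : ℤ) - (j : ℤ))
    * (jacobiP m ((j : ℤ) - (m : ℤ)) ((2 * B + m : ℤ) - (j : ℤ)) (1 - 2 * μ)) ^ 2

open Polynomial in
theorem coeff_one_add_C_mul_X_pow {R : Type*} [CommRing R] (a : R) (n k : ℕ) :
    ((1 + C a * X : R[X]) ^ n).coeff k = n.choose k * a ^ k := by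
  have h : (1 + C a * X : R[X]) ^ n = ((1 + X : R[X]) ^ n).comp (C a * X) := by simp
  rw [h, comp_C_mul_X_coeff, coeff_one_add_X_pow]

open Polynomial in
/-- The polynomial `(1 - μ t) ^ b * (1 + (1 - μ) t) ^ a`, whose `m`-th coefficient is
`P_m^{(a-m, b-m)}(1 - 2 μ)`. -/
noncomputable def jacobiGen (μ : ℝ) (a b : ℕ) : ℝ[X] :=
  (1 + C (-μ) * X) ^ b * (1 + C (1 - μ) * X) ^ a

theorem coeff_jacobiGen (μ : ℝ) (a b m : ℕ) :
    (jacobiGen μ a b).coeff m = jacobiP m ((a : ℤ) - m) ((b : ℤ) - m) (1 - 2 * μ) := by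
  rw [jacobiGen, Polynomial.coeff_mul, Finset.Nat.sum_antidiagonal_eq_sum_range_succ_mk, jacobiP]
  refine Finset.sum_congr rfl fun s _ => ?_
  have ha : ((m : ℤ) + (a - m)).toNat = a := by lia
  have hb : ((m : ℤ) + (b - m)).toNat = b := by lia
  rw [coeff_one_add_C_mul_X_pow, coeff_one_add_C_mul_X_pow, ha, hb,
    show (1 - 2 * μ - 1) / 2 = -μ by ring, show (1 - 2 * μ + 1) / 2 = 1 - μ by ring]
  ring

open Polynomial in
/-- Bivariate generating identity: the binomial average of `G_j(t) G_j(u)` is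
`(1 + μ (1 - μ) t u) ^ N`. -/
theorem sum_jacobiGen_mul_jacobiGen (μ : ℝ) (N : ℕ) :
    ∑ j ∈ range (N + 1), C (C (N.choose j * μ ^ j * (1 - μ) ^ (N - j))) *
      (C (jacobiGen μ j (N - j)) * (jacobiGen μ j (N - j)).map C) =
    (1 + C (C (μ * (1 - μ)) * X) * X : ℝ[X][X]) ^ N := by
  have h : (1 + C (C (μ * (1 - μ)) * X) * X : ℝ[X][X]) =
      C (C μ) * (1 + C (C (1 - μ) * X)) * (1 + C (C (1 - μ)) * X) +
        C (C (1 - μ)) * (1 + C (C (-μ) * X)) * (1 + C (C (-μ)) * X) := by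
    simp only [map_mul, map_sub, map_neg, map_one]
    ring
  rw [h, add_pow]
  refine sum_congr rfl fun j _ => ?_
  simp only [jacobiGen, Polynomial.map_mul, Polynomial.map_pow, Polynomial.map_add,
    Polynomial.map_one, map_C, map_X, map_mul, map_pow, map_add, map_one, map_natCast, mul_pow]
  ring

open Polynomial in
/-- Orthogonality norm of the Krawtchouk polynomials, in terms of their generating polynomials. -/
theorem sum_choose_mul_coeff_jacobiGen_sq (μ : ℝ) (N m : ℕ) :
    ∑ j ∈ range (N + 1), N.choose j * μ ^ j * (1 - μ) ^ (N - j) *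
      (jacobiGen μ j (N - j)).coeff m ^ 2 = N.choose m * (μ * (1 - μ)) ^ m := by
  have h := congrArg (fun P : ℝ[X][X] => (P.coeff m).coeff m) (sum_jacobiGen_mul_jacobiGen μ N)
  simp only [finsetSum_coeff, coeff_C_mul, coeff_map, coeff_mul_C,
    coeff_one_add_C_mul_X_pow, mul_pow, ← C_pow, ← C_eq_natCast, coeff_X_pow_self] at h
  rw [mul_pow]
  simpa [sq] using h

theorem genBinomP_eq (B m : ℕ) (μ : ℝ) (h0 : 0 < μ) (h1 : μ < 1) (j : ℕ)
    (hj : j ≤ 2 * B + 2 * m) :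
    genBinomP B m μ j = (((2 * B + 2 * m).choose j : ℝ) * μ ^ j * (1 - μ) ^ (2 * B + 2 * m - j) *
      (jacobiGen μ j (2 * B + 2 * m - j)).coeff m ^ 2) /
        ((2 * B + 2 * m).choose m * (μ * (1 - μ)) ^ m) := by
  have hq : 1 - μ ≠ 0 := by linarith
  have hexp : (2 * B + m : ℤ) - j = ((2 * B + 2 * m - j : ℕ) : ℤ) - m := by lia
  rw [genBinomP, coeff_jacobiGen, hexp, zpow_sub₀ h0.ne', zpow_sub₀ hq,
    Nat.cast_choose ℝ hj, Nat.cast_choose ℝ (by lia : m ≤ 2 * B + 2 * m),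
    show 2 * B + 2 * m - m = 2 * B + m by lia]
  simp only [zpow_natCast, Nat.cast_mul, mul_pow]
  have hf (n : ℕ) : (n.factorial : ℝ) ≠ 0 := by exact_mod_cast n.factorial_ne_zero
  have := hf j
  have := hf (2 * B + 2 * m - j)
  have := hf (2 * B + 2 * m)
  have := hf m
  have := hf (2 * B + m)
  field_simp

/-- The generalized binomial probabilities sum to one. -/
theorem genBinomP_sum_eq_one (B m : ℕ) (μ : ℝ) (h0 : 0 < μ) (h1 : μ < 1) :
    ∑ j ∈ Finset.range (2 * B + 2 * m + 1), genBinomP B m μ j = 1 := by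
  rw [Finset.sum_congr rfl fun j hj => genBinomP_eq B m μ h0 h1 j
    (Nat.lt_succ_iff.mp (Finset.mem_range.mp hj)), ← Finset.sum_div,
    sum_choose_mul_coeff_jacobiGen_sq]
  have hq : 0 < 1 - μ := by linarith
  have hc : 0 < (2 * B + 2 * m).choose m := Nat.choose_pos (by lia)
  exact div_self (by positivity)
end

section
/- For all integers B ≥ 0, m ≥ 0, every real μ with 0 < μ < 1, and every real t, the characteristic function of the generalized binomial distribution satisfies Σ_{j=0}^{2B+2m} e^{ijt}·p_j(2B, μ, m) = e^{imt}·((1−μ) + μ·e^{it})^{2B}·P_m^{(0,2B)}(1 − 4μ(1−μ)(1 − cos t)). -/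
open Finset

open Polynomial in
/-- The coefficients of a power of the linear polynomial `a + b X`. -/
theorem coeff_C_add_C_mul_X_pow {R : Type*} [CommRing R] (a b : R) (n k : ℕ) :
    ((C a + C b * X) ^ n : R[X]).coeff k = n.choose k * a ^ (n - k) * b ^ k := by
  have hsum : ((C a + C b * X) ^ n : R[X])
      = ∑ i ∈ range (n + 1), C (n.choose i * a ^ (n - i) * b ^ i) * X ^ i := by
    rw [add_comm, add_pow]
    refine sum_congr rfl fun i _ => ?_
    simp only [map_mul, map_pow, map_natCast, mul_pow]
    ring
  rw [hsum, finsetSum_coeff]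
  simp only [coeff_C_mul_X_pow]
  rw [Finset.sum_ite_eq]
  split_ifs with h
  · rfl
  · rw [Nat.choose_eq_zero_of_lt (by simpa using h)]
    simp

open Polynomial in
/-- The coefficients of a product of powers of two linear polynomials. -/
theorem coeff_linear_pow_mul_linear_pow {R : Type*} [CommRing R] (a b c d : R) (n l k : ℕ) :
    ((C a + C b * X) ^ n * (C c + C d * X) ^ l : R[X]).coeff k
      = ∑ s ∈ range (k + 1), (n.choose s * a ^ (n - s) * b ^ s)
          * (l.choose (k - s) * c ^ (l - (k - s)) * d ^ (k - s)) := by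
  rw [coeff_mul, Finset.Nat.sum_antidiagonal_eq_sum_range_succ_mk]
  simp only [coeff_C_add_C_mul_X_pow]

open Polynomial in
/-- The Jacobi polynomial at `1 - 2μ` as a coefficient of its generating polynomial. -/
theorem jacobiP_eq_coeff (B m j : ℕ) (hj : j ≤ 2 * B + 2 * m) (μ : ℝ) :
    ((jacobiP m ((j : ℤ) - (m : ℤ)) ((2 * B + m : ℤ) - (j : ℤ)) (1 - 2 * μ) : ℝ) : ℂ)
      = ((C 1 + C (-(μ : ℂ)) * X) ^ (2 * B + 2 * m - j)
          * (C 1 + C (1 - (μ : ℂ)) * X) ^ j : ℂ[X]).coeff m := by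
  have hα : ((m : ℤ) + ((j : ℤ) - m)).toNat = j := by omega
  have hβ : ((m : ℤ) + ((2 * B + m : ℤ) - j)).toNat = 2 * B + 2 * m - j := by omega
  rw [coeff_linear_pow_mul_linear_pow, jacobiP, hα, hβ]
  push_cast
  refine sum_congr rfl fun s _ => ?_
  rw [show ((1 - 2 * (μ : ℂ) - 1) / 2) = -μ by ring,
    show ((1 - 2 * (μ : ℂ) + 1) / 2) = 1 - μ by ring]
  simp only [one_pow]
  ring

/-- The generalized binomial probability with its denominators cleared. -/
theorem genBinomP_mul_choose (B m j : ℕ) (hj : j ≤ 2 * B + 2 * m) (μ : ℝ)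
    (h0 : 0 < μ) (h1 : μ < 1) :
    genBinomP B m μ j * ((2 * B + 2 * m).choose m * (μ * (1 - μ)) ^ m)
      = (2 * B + 2 * m).choose j * μ ^ j * (1 - μ) ^ (2 * B + 2 * m - j)
        * (jacobiP m ((j : ℤ) - (m : ℤ)) ((2 * B + m : ℤ) - (j : ℤ)) (1 - 2 * μ)) ^ 2 := by
  have hμ : μ ≠ 0 := h0.ne'
  have hν : 1 - μ ≠ 0 := (sub_pos.2 h1).ne'
  have hμpow : μ ^ ((j : ℤ) - (m : ℤ)) * μ ^ m = μ ^ j := by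
    rw [← zpow_natCast, ← zpow_natCast, ← zpow_add₀ hμ]
    congr 1
    ring
  have hνpow : (1 - μ) ^ ((2 * B + m : ℤ) - (j : ℤ)) * (1 - μ) ^ m
      = (1 - μ) ^ (2 * B + 2 * m - j) := by
    rw [← zpow_natCast, ← zpow_natCast, ← zpow_add₀ hν]
    congr 1
    push_cast [hj]
    ring
  have hfact : ((m.factorial * (2 * B + m).factorial : ℕ) : ℝ)
      / ((j.factorial * (2 * B + 2 * m - j).factorial : ℕ) : ℝ) * (2 * B + 2 * m).choose m
      = (2 * B + 2 * m).choose j := by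
    rw [div_mul_eq_mul_div, div_eq_iff (by positivity)]
    have hm := Nat.choose_mul_factorial_mul_factorial (show m ≤ 2 * B + 2 * m by omega)
    have hj' := Nat.choose_mul_factorial_mul_factorial hj
    rw [show 2 * B + 2 * m - m = 2 * B + m by omega] at hm
    norm_cast
    linarith
  rw [genBinomP, ← hfact, ← hμpow, ← hνpow, mul_pow]
  ring

open Polynomial in
/-- The diagonal coefficient of `y^m z^m` in `(a + b y + b z + d y z)^n`. -/
theorem coeff_coeff_bilinear_pow {R : Type*} [CommRing R] (a b d : R) (n m : ℕ) :
    (((C (C a + C b * X) + C (C b + C d * X) * X) ^ n : R[X][X]).coeff m).coeff m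
      = n.choose m * ∑ s ∈ range (m + 1), ((n - m).choose s * a ^ (n - m - s) * b ^ s)
          * (m.choose (m - s) * b ^ (m - (m - s)) * d ^ (m - s)) := by
  rw [coeff_C_add_C_mul_X_pow, mul_assoc, ← map_natCast (C : R →+* R[X]), coeff_C_mul,
    coeff_linear_pow_mul_linear_pow]

open Polynomial in
/-- Binomial summation of the squared coefficients of `(1 - μ X)^(n-j) (1 + (1-μ) X)^j`. -/
theorem sum_choose_mul_coeff_sq {R : Type*} [CommRing R] (μ w : R) (n m : ℕ) :
    ∑ j ∈ range (n + 1), w ^ j * (n.choose j * μ ^ j * (1 - μ) ^ (n - j)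
        * (((C 1 + C (-μ) * X) ^ (n - j) * (C 1 + C (1 - μ) * X) ^ j : R[X]).coeff m) ^ 2)
      = n.choose m * ∑ s ∈ range (m + 1),
          ((n - m).choose s * (1 - μ + μ * w) ^ (n - m - s) * (μ * (1 - μ) * (w - 1)) ^ s)
          * (m.choose (m - s) * (μ * (1 - μ) * (w - 1)) ^ (m - (m - s))
            * (μ * (1 - μ) * ((1 - μ) * w + μ)) ^ (m - s)) := by
  have hbase : (C (C (1 - μ + μ * w) + C (μ * (1 - μ) * (w - 1)) * X)
        + C (C (μ * (1 - μ) * (w - 1)) + C (μ * (1 - μ) * ((1 - μ) * w + μ)) * X) * X : R[X][X])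
      = C (C (w * μ)) * (C (C 1 + C (1 - μ) * X) * (C 1 + C (1 - μ) * X : R[X]).map C)
        + C (C (1 - μ)) * (C (C 1 + C (-μ) * X) * (C 1 + C (-μ) * X : R[X]).map C) := by
    simp only [Polynomial.map_add, Polynomial.map_mul, Polynomial.map_X, Polynomial.map_C,
      Polynomial.map_one, Polynomial.map_sub, Polynomial.map_neg, map_add, map_mul, map_sub, map_one, map_neg]
    ring
  rw [← coeff_coeff_bilinear_pow, hbase, add_pow, finsetSum_coeff, finsetSum_coeff]
  refine sum_congr rfl fun j _ => ?_
  set G : R[X] := (C 1 + C (-μ) * X) ^ (n - j) * (C 1 + C (1 - μ) * X) ^ j with hG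
  have hterm : ((C (C (w * μ)) * (C (C 1 + C (1 - μ) * X) * (C 1 + C (1 - μ) * X : R[X]).map C)) ^ j
      * (C (C (1 - μ)) * (C (C 1 + C (-μ) * X) * (C 1 + C (-μ) * X : R[X]).map C)) ^ (n - j)
      * (n.choose j : R[X][X]))
      = C (C (w ^ j * (n.choose j * μ ^ j * (1 - μ) ^ (n - j))) * G) * G.map C := by
    rw [hG, Polynomial.map_mul, Polynomial.map_pow, Polynomial.map_pow]
    generalize (C 1 + C (1 - μ) * X : R[X]) = p
    generalize (C 1 + C (-μ) * X : R[X]) = q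
    simp only [map_mul, map_pow, map_natCast, mul_pow]
    ring
  rw [hterm, coeff_C_mul, coeff_map, coeff_mul_C, coeff_C_mul]
  ring

/-- The characteristic function of the generalized binomial distribution:
`∑_{j=0}^{2B+2m} e^{ijt} p_j(2B,μ,m) = e^{imt} ((1−μ)+μe^{it})^{2B} P_m^{(0,2B)}(1−4μ(1−μ)(1−cos t))`. -/
theorem genBinomP_charFun (B m : ℕ) (μ : ℝ) (h0 : 0 < μ) (h1 : μ < 1) (t : ℝ) :
    ∑ j ∈ Finset.range (2 * B + 2 * m + 1),
        Complex.exp (Complex.I * (j : ℂ) * (t : ℂ)) * (genBinomP B m μ j : ℂ)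
      = Complex.exp (Complex.I * (m : ℂ) * (t : ℂ))
        * (((1 : ℂ) - (μ : ℂ)) + (μ : ℂ) * Complex.exp (Complex.I * (t : ℂ))) ^ (2 * B)
        * ((jacobiP m 0 (2 * B) (1 - 4 * μ * (1 - μ) * (1 - Real.cos t)) : ℝ) : ℂ) := by
  have hexp (k : ℕ) : Complex.exp (Complex.I * (k : ℂ) * (t : ℂ))
      = Complex.exp (Complex.I * (t : ℂ)) ^ k := by
    rw [← Complex.exp_nat_mul]
    ring_nf
  have hcos : 2 * Complex.cos t * Complex.exp (Complex.I * t)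
      = Complex.exp (Complex.I * t) ^ 2 + 1 := by
    rw [Complex.two_cos, add_mul, ← Complex.exp_add, ← Complex.exp_add, ← Complex.exp_nat_mul]
    rw [show -(t : ℂ) * Complex.I + Complex.I * t = 0 by ring, Complex.exp_zero]
    push_cast
    ring_nf
  have hμ : (μ : ℂ) ≠ 0 := by exact_mod_cast h0.ne'
  have hν : (1 - μ : ℂ) ≠ 0 := by exact_mod_cast (sub_pos.2 h1).ne'
  have hchoose : ((2 * B + 2 * m).choose m : ℂ) ≠ 0 := by
    exact_mod_cast (Nat.choose_pos (show m ≤ 2 * B + 2 * m by omega)).ne'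
  simp only [hexp]
  generalize Complex.exp (Complex.I * t) = w at hcos ⊢
  refine mul_right_cancel₀ (mul_ne_zero hchoose (pow_ne_zero m (mul_ne_zero hμ hν))) ?_
  have hterm : ∀ j ∈ range (2 * B + 2 * m + 1),
      w ^ j * (genBinomP B m μ j : ℂ)
        * ((2 * B + 2 * m).choose m * ((μ : ℂ) * (1 - μ)) ^ m)
      = _ := fun j hj => by
    have hj' : j ≤ 2 * B + 2 * m := by simpa [Nat.lt_succ_iff] using hj
    have h := congrArg (fun x : ℝ => (x : ℂ)) (genBinomP_mul_choose B m j hj' μ h0 h1)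
    push_cast at h
    rw [mul_assoc, h, jacobiP_eq_coeff B m j hj']
  rw [sum_mul, sum_congr rfl hterm, sum_choose_mul_coeff_sq]
  have hα : ((m : ℤ) + 0).toNat = m := by omega
  have hβ : ((m : ℤ) + 2 * B).toNat = 2 * B + m := by omega
  rw [jacobiP, hα, hβ, show 2 * B + 2 * m - m = 2 * B + m by omega]
  push_cast
  rw [mul_sum, mul_sum, sum_mul]
  refine sum_congr rfl fun s hs => ?_
  obtain ⟨r, rfl⟩ := Nat.exists_eq_add_of_le (show s ≤ m by simpa [Nat.lt_succ_iff] using hs)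
  rw [show s + r - s = r by omega, show s + r - r = s by omega,
    show 2 * B + (s + r) - s = 2 * B + r by omega]
  have hminus : (μ * (1 - μ) * (w - 1)) * (μ * (1 - μ) * (w - 1))
      = μ * (1 - μ) * (w * ((1 - 4 * (μ : ℂ) * (1 - μ) * (1 - Complex.cos t) - 1) / 2)) := by
    linear_combination (-(μ * (1 - μ)) ^ 2 : ℂ) * hcos
  have hplus : (1 - μ + μ * w) * (μ * (1 - μ) * ((1 - μ) * w + μ))
      = μ * (1 - μ) * (w * ((1 - 4 * (μ : ℂ) * (1 - μ) * (1 - Complex.cos t) + 1) / 2)) := by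
    linear_combination (-(μ * (1 - μ)) ^ 2 : ℂ) * hcos
  have hminus' := congrArg (· ^ s) hminus
  have hplus' := congrArg (· ^ r) hplus
  simp only [mul_pow _ _ s] at hminus'
  simp only [mul_pow _ _ r] at hplus'
  simp only [mul_pow, pow_add] at hminus' hplus' ⊢
  linear_combination ((2 * B + 2 * (s + r)).choose (s + r) * (2 * B + (s + r)).choose s
    * (s + r).choose r * (1 - μ + μ * w) ^ (2 * B) : ℂ)
    * congrArg₂ (· * ·) hminus' hplus'
end

section
/- For all integers B ≥ 0, m ≥ 0 with B + m ≥ 1 and every real μ with 0 < μ < 1, the Mandel parameter Q(μ) = V(μ)/E(μ) − 1 of the generalized binomial distribution, where E(μ) = Σ_{j=0}^{2B+2m} j·p_j(2B, μ, m) and V(μ) = Σ_{j=0}^{2B+2m} j²·p_j(2B, μ, m) − E(μ)², satisfies Q(μ) = −T_m(μ)/(2Bμ + m), where T_m(μ) = 2(B + m(2B+m+1))·μ² − 2m(2B+m+1)·μ + m. -/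
open Finset

/-- The mean `E(μ) = ∑_{j=0}^{2B+2m} j p_j(2B,μ,m)` of the generalized binomial distribution. -/
noncomputable def genBinomMean (B m : ℕ) (μ : ℝ) : ℝ :=
  ∑ j ∈ Finset.range (2 * B + 2 * m + 1), (j : ℝ) * genBinomP B m μ j

/-- The variance `V(μ) = ∑_{j=0}^{2B+2m} j² p_j(2B,μ,m) − E(μ)²`. -/
noncomputable def genBinomVar (B m : ℕ) (μ : ℝ) : ℝ :=
  (∑ j ∈ Finset.range (2 * B + 2 * m + 1), (j : ℝ) ^ 2 * genBinomP B m μ j)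
    - (genBinomMean B m μ) ^ 2

/-- The Mandel parameter `Q(μ) = V(μ)/E(μ) − 1`. -/
noncomputable def mandelQ (B m : ℕ) (μ : ℝ) : ℝ :=
  genBinomVar B m μ / genBinomMean B m μ - 1

namespace GenBinom

open Polynomial

/-- The generating polynomial `(1 - μX)^k (1 + (1-μ)X)^j` of the Krawtchouk polynomials of
order `j + k`, evaluated at `j`. -/
noncomputable def krawtchoukGen (μ : ℝ) (j k : ℕ) : ℝ[X] :=
  (1 + C (-μ) * X) ^ k * (1 + C (1 - μ) * X) ^ j

theorem coeff_one_add_C_mul_X_pow {R : Type*} [CommSemiring R] (r : R) (n a : ℕ) :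
    ((1 + C r * X) ^ n).coeff a = n.choose a * r ^ a := by
  have h : (1 + C r * X) ^ n = ((1 + X : R[X]) ^ n).comp (C r * X) := by simp
  rw [h, comp_C_mul_X_coeff, coeff_one_add_X_pow]

theorem jacobiP_eq_coeff (μ : ℝ) (m j k : ℕ) (α β : ℤ) (hα : m + α = j) (hβ : m + β = k) :
    jacobiP m α β (1 - 2 * μ) = (krawtchoukGen μ j k).coeff m := by
  rw [krawtchoukGen, coeff_mul, Finset.Nat.sum_antidiagonal_eq_sum_range_succ_mk, jacobiP]
  refine Finset.sum_congr rfl fun s _ => ?_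
  rw [hα, hβ, coeff_one_add_C_mul_X_pow, coeff_one_add_C_mul_X_pow, Int.toNat_natCast,
    Int.toNat_natCast, show (1 - 2 * μ - 1) / 2 = -μ by ring,
    show (1 - 2 * μ + 1) / 2 = 1 - μ by ring]
  ring

theorem mul_derivative_one_add_C_mul_X_pow {R : Type*} [CommRing R] (r : R) (n : ℕ) :
    (1 + C r * X) * derivative ((1 + C r * X) ^ n) = C (n * r) * (1 + C r * X) ^ n := by
  cases n with
  | zero => simp
  | succ n =>
    simp only [derivative_pow, derivative_add, derivative_one, derivative_C_mul, derivative_X,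
      Nat.add_sub_cancel, map_mul, C_eq_natCast]
    ring

theorem krawtchoukGen_derivative (μ : ℝ) (j k : ℕ) :
    derivative (krawtchoukGen μ j k) + C (1 - 2 * μ) * (derivative (krawtchoukGen μ j k) * X)
        - C (μ * (1 - μ)) * (derivative (krawtchoukGen μ j k) * X * X)
      = C (j - (j + k) * μ) * krawtchoukGen μ j k
        - C ((j + k) * (μ * (1 - μ))) * (krawtchoukGen μ j k * X) := by
  have h₁ := mul_derivative_one_add_C_mul_X_pow (-μ) k
  have h₂ := mul_derivative_one_add_C_mul_X_pow (1 - μ) j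
  rw [krawtchoukGen, derivative_mul]
  simp only [map_mul, map_sub, map_add, map_neg, map_one, map_natCast, map_ofNat] at h₁ h₂ ⊢
  linear_combination (1 + (1 - C μ) * X) * (1 + (1 - C μ) * X) ^ j * h₁
    + (1 + -C μ * X) * (1 + -C μ * X) ^ k * h₂

theorem krawtchouk_recurrence (μ : ℝ) (j k n : ℕ) :
    j * (krawtchoukGen μ j k).coeff n = (n + 1) * (krawtchoukGen μ j k).coeff (n + 1)
      + ((j + k) * μ + (1 - 2 * μ) * n) * (krawtchoukGen μ j k).coeff n
      + μ * (1 - μ) * (j + k - n + 1) * (krawtchoukGen μ j k * X).coeff n := by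
  have h := congrArg (fun p => p.coeff n) (krawtchoukGen_derivative μ j k)
  obtain _ | _ | n := n <;>
    simp only [coeff_add, coeff_sub, coeff_C_mul, coeff_mul_X, coeff_mul_X_zero,
      coeff_derivative, zero_add] at h ⊢ <;>
    push_cast at h ⊢ <;>
    linear_combination -h

/-- The binomial weight `C(N,j) μ^j (1-μ)^(N-j)`. -/
noncomputable def binomWeight (N : ℕ) (μ : ℝ) (j : ℕ) : ℝ :=
  N.choose j * μ ^ j * (1 - μ) ^ (N - j)

theorem sum_krawtchoukGen_mul (N : ℕ) (μ : ℝ) :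
    ∑ j ∈ range (N + 1), C (C (binomWeight N μ j)) *
        ((krawtchoukGen μ j (N - j)).map C * C (krawtchoukGen μ j (N - j)))
      = (1 + C (C (μ * (1 - μ)) * X) * X) ^ N := by
  have h : (1 + C (C (μ * (1 - μ)) * X) * X : ℝ[X][X])
      = C (C μ) * ((1 + C (C (1 - μ)) * X) * (1 + C (C (1 - μ) * X)))
        + C (C (1 - μ)) * ((1 + C (C (-μ)) * X) * (1 + C (C (-μ) * X))) := by
    simp only [map_mul, map_sub, map_neg, map_one]
    ring
  rw [h, add_pow]
  refine Finset.sum_congr rfl fun j _ => ?_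
  simp only [binomWeight, krawtchoukGen, Polynomial.map_mul, Polynomial.map_pow,
    Polynomial.map_add, Polynomial.map_one, map_C, map_X, map_mul, map_pow, map_add, map_one,
    map_natCast, mul_pow]
  ring

theorem krawtchouk_orthogonality (N : ℕ) (μ : ℝ) (a b : ℕ) :
    ∑ j ∈ range (N + 1), binomWeight N μ j *
        ((krawtchoukGen μ j (N - j)).coeff a * (krawtchoukGen μ j (N - j)).coeff b)
      = if a = b then N.choose a * (μ * (1 - μ)) ^ a else 0 := by
  have h := congrArg (fun p => (p.coeff a).coeff b) (sum_krawtchoukGen_mul N μ)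
  simp only [finsetSum_coeff, coeff_C_mul, coeff_mul_C, coeff_map,
    coeff_one_add_C_mul_X_pow] at h
  rw [h, mul_pow, ← C_pow, ← C_eq_natCast, coeff_C_mul, coeff_C_mul, coeff_X_pow]
  simp [eq_comm]

theorem genBinomP_mul (B m : ℕ) {μ : ℝ} (h0 : 0 < μ) (h1 : μ < 1) {j : ℕ}
    (hj : j ≤ 2 * B + 2 * m) :
    genBinomP B m μ j * ((2 * B + 2 * m).choose m * (μ * (1 - μ)) ^ m)
      = binomWeight (2 * B + 2 * m) μ j
        * ((krawtchoukGen μ j (2 * B + 2 * m - j)).coeff m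
          * (krawtchoukGen μ j (2 * B + 2 * m - j)).coeff m) := by
  obtain ⟨k, hk⟩ := Nat.exists_eq_add_of_le hj
  have hq : 0 < 1 - μ := sub_pos.mpr h1
  have hkZ : (2 * B + 2 * m : ℤ) = j + k := by exact_mod_cast hk
  have hkj : 2 * B + 2 * m - j = k := by omega
  rw [genBinomP, binomWeight, jacobiP_eq_coeff μ m j k _ _ (by ring) (by linarith), hkj,
    show (2 * B + m : ℤ) - j = (k : ℤ) - m by linarith, zpow_sub₀ h0.ne', zpow_sub₀ hq.ne',
    Nat.cast_choose ℝ (show m ≤ 2 * B + 2 * m by omega), Nat.cast_choose ℝ hj, hkj,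
    show 2 * B + 2 * m - m = 2 * B + m by omega]
  simp only [zpow_natCast, Nat.cast_mul, mul_pow]
  field_simp

theorem krawtchouk_orthogonality_lower (N : ℕ) (μ : ℝ) {a b : ℕ} (hab : a ≤ b) :
    ∑ j ∈ range (N + 1), binomWeight N μ j *
        ((krawtchoukGen μ j (N - j) * X).coeff a * (krawtchoukGen μ j (N - j)).coeff b) = 0 := by
  cases a with
  | zero => simp
  | succ a =>
    simp only [coeff_mul_X]
    rw [krawtchouk_orthogonality, if_neg (by omega)]

theorem cast_choose_succ_mul {N n : ℕ} (hn : n ≤ N) :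
    (N.choose (n + 1) * (n + 1) : ℝ) = N.choose n * (N - n) := by
  rw [← Nat.cast_sub hn]
  exact_mod_cast Nat.choose_succ_right_eq N n

theorem krawtchouk_norm_lower {N m : ℕ} (hm : m ≤ N) (μ : ℝ) :
    μ * (1 - μ) * (N - m + 1) * ∑ j ∈ range (N + 1), binomWeight N μ j *
        ((krawtchoukGen μ j (N - j) * X).coeff m * (krawtchoukGen μ j (N - j) * X).coeff m)
      = m * (N.choose m * (μ * (1 - μ)) ^ m) := by
  cases m with
  | zero => simp
  | succ n =>
    simp only [coeff_mul_X]
    rw [krawtchouk_orthogonality, if_pos rfl]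
    have h := cast_choose_succ_mul (show n ≤ N by omega)
    push_cast
    linear_combination -(μ * (1 - μ)) ^ (n + 1) * h

theorem krawtchouk_recurrence_of_le {N j : ℕ} (hj : j ≤ N) (μ : ℝ) (n : ℕ) :
    j * (krawtchoukGen μ j (N - j)).coeff n
      = (n + 1) * (krawtchoukGen μ j (N - j)).coeff (n + 1)
      + (N * μ + (1 - 2 * μ) * n) * (krawtchoukGen μ j (N - j)).coeff n
      + μ * (1 - μ) * (N - n + 1) * (krawtchoukGen μ j (N - j) * X).coeff n := by
  have h := krawtchouk_recurrence μ j (N - j) n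
  rwa [Nat.cast_sub hj, add_sub_cancel] at h

theorem krawtchouk_first_moment (N m : ℕ) (μ : ℝ) :
    ∑ j ∈ range (N + 1), (j : ℝ) * (binomWeight N μ j *
        ((krawtchoukGen μ j (N - j)).coeff m * (krawtchoukGen μ j (N - j)).coeff m))
      = (N * μ + (1 - 2 * μ) * m) * (N.choose m * (μ * (1 - μ)) ^ m) := by
  have hdiag := krawtchouk_orthogonality N μ m m
  have hupper := krawtchouk_orthogonality N μ (m + 1) m
  have hlower := krawtchouk_orthogonality_lower N μ (le_refl m)
  rw [if_pos rfl] at hdiag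
  rw [if_neg (by omega)] at hupper
  have h : ∑ j ∈ range (N + 1), (j : ℝ) * (binomWeight N μ j *
        ((krawtchoukGen μ j (N - j)).coeff m * (krawtchoukGen μ j (N - j)).coeff m))
      = (m + 1) * ∑ j ∈ range (N + 1), binomWeight N μ j *
          ((krawtchoukGen μ j (N - j)).coeff (m + 1) * (krawtchoukGen μ j (N - j)).coeff m)
        + (N * μ + (1 - 2 * μ) * m) * ∑ j ∈ range (N + 1), binomWeight N μ j *
          ((krawtchoukGen μ j (N - j)).coeff m * (krawtchoukGen μ j (N - j)).coeff m)
        + μ * (1 - μ) * (N - m + 1) * ∑ j ∈ range (N + 1), binomWeight N μ j *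
          ((krawtchoukGen μ j (N - j) * X).coeff m * (krawtchoukGen μ j (N - j)).coeff m) := by
    simp only [Finset.mul_sum, ← Finset.sum_add_distrib]
    refine Finset.sum_congr rfl fun j hj => ?_
    have hrec := krawtchouk_recurrence_of_le (Finset.mem_range_succ_iff.mp hj) μ m
    linear_combination binomWeight N μ j * (krawtchoukGen μ j (N - j)).coeff m * hrec
  rw [h, hdiag, hupper, hlower]
  ring

theorem krawtchouk_second_moment {N m : ℕ} (hm : m ≤ N) (μ : ℝ) :
    ∑ j ∈ range (N + 1), (j : ℝ) ^ 2 * (binomWeight N μ j *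
        ((krawtchoukGen μ j (N - j)).coeff m * (krawtchoukGen μ j (N - j)).coeff m))
      = ((N * μ + (1 - 2 * μ) * m) ^ 2
          + μ * (1 - μ) * ((m + 1) * (N - m) + m * (N - m + 1)))
        * (N.choose m * (μ * (1 - μ)) ^ m) := by
  have hdiag := krawtchouk_orthogonality N μ m m
  have hupper := krawtchouk_orthogonality N μ (m + 1) m
  have hupper_diag := krawtchouk_orthogonality N μ (m + 1) (m + 1)
  have hlower := krawtchouk_orthogonality_lower N μ (le_refl m)
  have hlower_upper := krawtchouk_orthogonality_lower N μ (Nat.le_succ m)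
  have hlower_diag := krawtchouk_norm_lower hm μ
  have hchoose := cast_choose_succ_mul hm
  rw [if_pos rfl] at hdiag hupper_diag
  rw [if_neg (by omega)] at hupper
  have h : ∑ j ∈ range (N + 1), (j : ℝ) ^ 2 * (binomWeight N μ j *
        ((krawtchoukGen μ j (N - j)).coeff m * (krawtchoukGen μ j (N - j)).coeff m))
      = (m + 1) ^ 2 * (∑ j ∈ range (N + 1), binomWeight N μ j *
          ((krawtchoukGen μ j (N - j)).coeff (m + 1)
            * (krawtchoukGen μ j (N - j)).coeff (m + 1)))
        + (N * μ + (1 - 2 * μ) * m) ^ 2 * (∑ j ∈ range (N + 1), binomWeight N μ j *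
          ((krawtchoukGen μ j (N - j)).coeff m * (krawtchoukGen μ j (N - j)).coeff m))
        + (μ * (1 - μ) * (N - m + 1)) ^ 2 * (∑ j ∈ range (N + 1), binomWeight N μ j *
          ((krawtchoukGen μ j (N - j) * X).coeff m * (krawtchoukGen μ j (N - j) * X).coeff m))
        + 2 * (m + 1) * (N * μ + (1 - 2 * μ) * m) * (∑ j ∈ range (N + 1), binomWeight N μ j *
          ((krawtchoukGen μ j (N - j)).coeff (m + 1) * (krawtchoukGen μ j (N - j)).coeff m))
        + 2 * (m + 1) * (μ * (1 - μ) * (N - m + 1)) * (∑ j ∈ range (N + 1), binomWeight N μ j *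
          ((krawtchoukGen μ j (N - j) * X).coeff m * (krawtchoukGen μ j (N - j)).coeff (m + 1)))
        + 2 * (N * μ + (1 - 2 * μ) * m) * (μ * (1 - μ) * (N - m + 1))
          * (∑ j ∈ range (N + 1), binomWeight N μ j *
          ((krawtchoukGen μ j (N - j) * X).coeff m * (krawtchoukGen μ j (N - j)).coeff m)) := by
    simp only [Finset.mul_sum, ← Finset.sum_add_distrib]
    refine Finset.sum_congr rfl fun j hj => ?_
    have hrec := krawtchouk_recurrence_of_le (Finset.mem_range_succ_iff.mp hj) μ m
    linear_combination binomWeight N μ j * (j * (krawtchoukGen μ j (N - j)).coeff m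
      + ((m + 1) * (krawtchoukGen μ j (N - j)).coeff (m + 1)
      + (N * μ + (1 - 2 * μ) * m) * (krawtchoukGen μ j (N - j)).coeff m
      + μ * (1 - μ) * (N - m + 1) * (krawtchoukGen μ j (N - j) * X).coeff m)) * hrec
  rw [h, hdiag, hupper, hlower, hlower_upper, hupper_diag]
  linear_combination μ * (1 - μ) * (N - m + 1) * hlower_diag
    + (m + 1) * (μ * (1 - μ)) ^ (m + 1) * hchoose

theorem sum_mul_genBinomP (B m : ℕ) {μ : ℝ} (h0 : 0 < μ) (h1 : μ < 1) (f : ℕ → ℝ) {c : ℝ}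
    (hc : ∑ j ∈ range (2 * B + 2 * m + 1), f j * (binomWeight (2 * B + 2 * m) μ j *
        ((krawtchoukGen μ j (2 * B + 2 * m - j)).coeff m
          * (krawtchoukGen μ j (2 * B + 2 * m - j)).coeff m))
      = c * ((2 * B + 2 * m).choose m * (μ * (1 - μ)) ^ m)) :
    ∑ j ∈ range (2 * B + 2 * m + 1), f j * genBinomP B m μ j = c := by
  have hq : 0 < 1 - μ := sub_pos.mpr h1
  have hchoose : 0 < (2 * B + 2 * m).choose m := Nat.choose_pos (by omega)
  have hnorm : (0 : ℝ) < (2 * B + 2 * m).choose m * (μ * (1 - μ)) ^ m := by positivity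
  refine mul_right_cancel₀ hnorm.ne' ?_
  rw [← hc, Finset.sum_mul]
  refine Finset.sum_congr rfl fun j hj => ?_
  rw [mul_assoc, genBinomP_mul B m h0 h1 (Finset.mem_range_succ_iff.mp hj)]

/-- The mean of the generalized binomial distribution. -/
theorem genBinomMean_eq (B m : ℕ) {μ : ℝ} (h0 : 0 < μ) (h1 : μ < 1) :
    genBinomMean B m μ = 2 * B * μ + m := by
  rw [genBinomMean, sum_mul_genBinomP B m h0 h1 _ (krawtchouk_first_moment _ m μ)]
  push_cast
  ring

/-- The variance of the generalized binomial distribution. -/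
theorem genBinomVar_eq (B m : ℕ) {μ : ℝ} (h0 : 0 < μ) (h1 : μ < 1) :
    genBinomVar B m μ = 2 * μ * (1 - μ) * (B + m * (2 * B + m + 1)) := by
  rw [genBinomVar, genBinomMean_eq B m h0 h1, sum_mul_genBinomP B m h0 h1 (fun j => (j : ℝ) ^ 2)
    (krawtchouk_second_moment (by omega) μ)]
  push_cast
  ring

end GenBinom

/-- The Mandel parameter of the generalized binomial distribution equals
`−T_m(μ)/(2Bμ+m)` with `T_m(μ) = 2(B+m(2B+m+1))μ² − 2m(2B+m+1)μ + m`. -/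
theorem mandelQ_eq (B m : ℕ) (hBm : 1 ≤ B + m) (μ : ℝ) (h0 : 0 < μ) (h1 : μ < 1) :
    mandelQ B m μ
      = -(2 * ((B : ℝ) + m * (2 * B + m + 1)) * μ ^ 2 - 2 * m * (2 * B + m + 1) * μ + m)
          / (2 * B * μ + m) := by
  have hpos : (0 : ℝ) < 2 * B * μ + m := by
    rcases Nat.eq_zero_or_pos m with rfl | hm
    · have hB : 0 < B := by omega
      positivity
    · positivity
  rw [mandelQ, GenBinom.genBinomVar_eq B m h0 h1, GenBinom.genBinomMean_eq B m h0 h1,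
    eq_div_iff hpos.ne', sub_mul, div_mul_cancel₀ _ hpos.ne']
  ring
end

section
/- Let B ≥ 0 and m ≥ 1 be integers, set c = 2B+m+1 and T_m(μ) = 2(B + mc)·μ² − 2mc·μ + m. Then 1 − 2(B + mc)/(mc²) ≥ 0, and the two real numbers μ^± = (mc/(2(B + mc)))·(1 ± (1 − 2(B + mc)/(mc²))^{1/2}) satisfy T_m(μ^+) = 0 and T_m(μ^−) = 0, and 0 < μ^− ≤ μ^+ < 1. -/
/-- If `t` is a square root of the reduced discriminant `1 - 2A/(mc²)`, then `(mc/(2A))(1 + t)` is a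
root of `2Aμ² - 2mcμ + m`. -/
theorem quadratic_root_of_sq_eq {A m c t : ℝ} (hA : A ≠ 0) (hm : m ≠ 0) (hc : c ≠ 0)
    (ht : t ^ 2 = 1 - 2 * A / (m * c ^ 2)) :
    2 * A * (m * c / (2 * A) * (1 + t)) ^ 2 - 2 * m * c * (m * c / (2 * A) * (1 + t)) + m = 0 := by
  have expand : 2 * A * (m * c / (2 * A) * (1 + t)) ^ 2
      - 2 * m * c * (m * c / (2 * A) * (1 + t)) + m
      = (m * c) ^ 2 / (2 * A) * (t ^ 2 - 1) + m := by
    field_simp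
    ring
  rw [expand, ht]
  field_simp
  ring

/-- Roots of the quadratic `T_m(μ) = 2(B+mc)μ² − 2mcμ + m` (with `c = 2B+m+1`), the numerator of
minus the Mandel parameter of the generalized binomial distribution `B(2B,μ,m)`: the discriminant
expression `1 − 2(B+mc)/(mc²)` is nonnegative, the two numbers
`μ^± = (mc/(2(B+mc)))(1 ± √(1 − 2(B+mc)/(mc²)))` are roots of `T_m`, and `0 < μ⁻ ≤ μ⁺ < 1`. -/
theorem mandel_quadratic_roots (B m : ℕ) (hm : 1 ≤ m) :
    (0 : ℝ) ≤ 1 - 2 * ((B : ℝ) + m * (2 * B + m + 1)) / (m * (2 * B + m + 1 : ℝ) ^ 2)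
    ∧ (2 * ((B : ℝ) + m * (2 * B + m + 1))
          * ((m * (2 * B + m + 1 : ℝ) / (2 * ((B : ℝ) + m * (2 * B + m + 1))))
            * (1 + Real.sqrt (1 - 2 * ((B : ℝ) + m * (2 * B + m + 1))
                / (m * (2 * B + m + 1 : ℝ) ^ 2)))) ^ 2
        - 2 * m * (2 * B + m + 1 : ℝ)
          * ((m * (2 * B + m + 1 : ℝ) / (2 * ((B : ℝ) + m * (2 * B + m + 1))))
            * (1 + Real.sqrt (1 - 2 * ((B : ℝ) + m * (2 * B + m + 1))
                / (m * (2 * B + m + 1 : ℝ) ^ 2))))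
        + m = 0)
    ∧ (2 * ((B : ℝ) + m * (2 * B + m + 1))
          * ((m * (2 * B + m + 1 : ℝ) / (2 * ((B : ℝ) + m * (2 * B + m + 1))))
            * (1 - Real.sqrt (1 - 2 * ((B : ℝ) + m * (2 * B + m + 1))
                / (m * (2 * B + m + 1 : ℝ) ^ 2)))) ^ 2
        - 2 * m * (2 * B + m + 1 : ℝ)
          * ((m * (2 * B + m + 1 : ℝ) / (2 * ((B : ℝ) + m * (2 * B + m + 1))))
            * (1 - Real.sqrt (1 - 2 * ((B : ℝ) + m * (2 * B + m + 1))
                / (m * (2 * B + m + 1 : ℝ) ^ 2))))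
        + m = 0)
    ∧ 0 < (m * (2 * B + m + 1 : ℝ) / (2 * ((B : ℝ) + m * (2 * B + m + 1))))
            * (1 - Real.sqrt (1 - 2 * ((B : ℝ) + m * (2 * B + m + 1))
                / (m * (2 * B + m + 1 : ℝ) ^ 2)))
    ∧ (m * (2 * B + m + 1 : ℝ) / (2 * ((B : ℝ) + m * (2 * B + m + 1))))
            * (1 - Real.sqrt (1 - 2 * ((B : ℝ) + m * (2 * B + m + 1))
                / (m * (2 * B + m + 1 : ℝ) ^ 2)))
        ≤ (m * (2 * B + m + 1 : ℝ) / (2 * ((B : ℝ) + m * (2 * B + m + 1))))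
            * (1 + Real.sqrt (1 - 2 * ((B : ℝ) + m * (2 * B + m + 1))
                / (m * (2 * B + m + 1 : ℝ) ^ 2)))
    ∧ (m * (2 * B + m + 1 : ℝ) / (2 * ((B : ℝ) + m * (2 * B + m + 1))))
            * (1 + Real.sqrt (1 - 2 * ((B : ℝ) + m * (2 * B + m + 1))
                / (m * (2 * B + m + 1 : ℝ) ^ 2)))
        < 1 := by
  have hm' : (1 : ℝ) ≤ m := by exact_mod_cast hm
  have hB : (0 : ℝ) ≤ B := B.cast_nonneg
  have hc_ge : (2 : ℝ) * B + 2 ≤ 2 * B + m + 1 := by linarith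
  generalize (2 * B + m + 1 : ℝ) = c at *
  generalize hA : (B : ℝ) + m * c = A
  have hc : 0 < c := by linarith
  have hm0 : (0 : ℝ) < m := by linarith
  have hmc : 1 ≤ m * c := by nlinarith
  have hA0 : 0 < A := by linarith
  have hdisc : 0 ≤ 1 - 2 * A / (m * c ^ 2) := by
    rw [sub_nonneg, div_le_one (by positivity)]
    nlinarith [mul_nonneg (sub_nonneg.2 hmc) (by linarith : 0 ≤ c - 2)]
  have hs_sq := Real.sq_sqrt hdisc
  have hs_nonneg := Real.sqrt_nonneg (1 - 2 * A / (m * c ^ 2))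
  have hs_lt : √(1 - 2 * A / (m * c ^ 2)) < 1 := by
    rw [Real.sqrt_lt' one_pos, one_pow]
    exact sub_lt_self _ (by positivity)
  generalize √(1 - 2 * A / (m * c ^ 2)) = s at *
  have hcoef : 0 < m * c / (2 * A) := by positivity
  refine ⟨hdisc, quadratic_root_of_sq_eq hA0.ne' hm0.ne' hc.ne' hs_sq, ?_,
    mul_pos hcoef (by linarith), mul_le_mul_of_nonneg_left (by linarith) hcoef.le, ?_⟩
  · rw [sub_eq_add_neg 1 s]
    exact quadratic_root_of_sq_eq hA0.ne' hm0.ne' hc.ne' (by rw [neg_sq, hs_sq])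
  · rw [div_mul_eq_mul_div, div_lt_one (by positivity)]
    nlinarith
end

section
/- For all integers B ≥ 0, m ≥ 0, every integer j with 0 ≤ j ≤ 2B+2m, and every real t with 0 < t < 1, the m-th derivative of the function t ↦ t^{j+m}·(1−t)^{2B+m−j} (integer, possibly negative, power for the second factor) satisfies (d/dt)^m [t^{j+m}(1−t)^{2B+m−j}] = ((m+j)!/j!)·t^j·(1−t)^{2B−j}·Σ_{k=0}^{m} (−1)^k·C(m,k)·((2B+m+1)_k/(j+1)_k)·t^k, where (1−t)^{2B−j} is an integer (possibly negative) power. -/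
open Finset

/-- The coefficient of `x ^ k` in the terminating series `₂F₁(-n, s; a + 1; x)`. -/
noncomputable def hypergeomCoeff (n a : ℕ) (s : ℝ) (k : ℕ) : ℝ :=
  (-1 : ℝ) ^ k * (n.choose k : ℝ)
    * ((∏ i ∈ range k, (s + i)) / (∏ i ∈ range k, ((a : ℝ) + 1 + i)))

theorem hypergeomCoeff_zero (n a : ℕ) (s : ℝ) : hypergeomCoeff n a s 0 = 1 := by
  simp [hypergeomCoeff]

theorem hypergeomCoeff_of_lt {n k : ℕ} (h : n < k) (a : ℕ) (s : ℝ) :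
    hypergeomCoeff n a s k = 0 := by
  simp [hypergeomCoeff, Nat.choose_eq_zero_of_lt h]

theorem hypergeomCoeff_succ (n a : ℕ) (s : ℝ) (k : ℕ) :
    ((a : ℝ) + 1) * hypergeomCoeff (n + 1) a s (k + 1)
      = (a + 2 + k) * hypergeomCoeff n (a + 1) (s + 1) (k + 1)
        - (s - n + k) * hypergeomCoeff n (a + 1) (s + 1) k := by
  have hs : ∏ i ∈ range (k + 1), (s + i) = s * ∏ i ∈ range k, (s + 1 + i) := by
    rw [prod_range_succ', mul_comm]
    push_cast
    simp only [add_zero, add_assoc, add_comm (1 : ℝ)]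
  have ha : ∏ i ∈ range (k + 1), ((a : ℝ) + 1 + i)
      = (a + 1) * ∏ i ∈ range k, (((a + 1 : ℕ) : ℝ) + 1 + i) := by
    rw [prod_range_succ', mul_comm]
    push_cast
    simp only [add_zero, add_assoc, add_comm (1 : ℝ)]
  have hR : ∏ i ∈ range k, (((a + 1 : ℕ) : ℝ) + 1 + i) ≠ 0 :=
    prod_ne_zero_iff.mpr fun i _ => by positivity
  have hchoose : ((n.choose (k + 1) : ℕ) : ℝ) * (k + 1) = n.choose k * (n - k) := by
    rcases le_or_gt k n with h | h
    · have := Nat.choose_succ_right_eq n k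
      rw [← Nat.cast_sub h]
      exact_mod_cast this
    · simp [Nat.choose_eq_zero_of_lt h, Nat.choose_eq_zero_of_lt (h.trans (Nat.lt_succ_self k))]
  unfold hypergeomCoeff
  rw [hs, ha, prod_range_succ (fun i : ℕ => s + 1 + (i : ℝ)),
    prod_range_succ (fun i : ℕ => ((a + 1 : ℕ) : ℝ) + 1 + (i : ℝ)), Nat.choose_succ_succ]
  generalize ∏ i ∈ range k, (((a + 1 : ℕ) : ℝ) + 1 + i) = R at hR ⊢
  generalize ∏ i ∈ range k, (s + 1 + (i : ℝ)) = S
  have h1 : (a : ℝ) + 1 ≠ 0 := by positivity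
  have h2 : (a : ℝ) + 1 + 1 + k ≠ 0 := by positivity
  have h3 : (a : ℝ) + 2 + k = a + 1 + 1 + k := by ring
  push_cast
  rw [h3]
  field_simp
  rw [pow_succ]
  linear_combination (-1 : ℝ) ^ k * S * hchoose

/-- The terminating series `₂F₁(-n, s; a + 1; x)`. -/
noncomputable def hypergeomSum (n a : ℕ) (s x : ℝ) : ℝ :=
  ∑ k ∈ range (n + 1), hypergeomCoeff n a s k * x ^ k

theorem hasDerivAt_hypergeomSum (n a : ℕ) (s x : ℝ) :
    HasDerivAt (hypergeomSum n a s)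
      (∑ k ∈ range (n + 1), hypergeomCoeff n a s k * (k * x ^ (k - 1))) x :=
  HasDerivAt.fun_sum fun k _ => (hasDerivAt_pow k x).const_mul _

theorem hypergeomSum_succ (n a : ℕ) (s x : ℝ) :
    ((a : ℝ) + 1) * hypergeomSum (n + 1) a s x
      = (a + 1 - (s - n) * x) * hypergeomSum n (a + 1) (s + 1) x
        + x * (1 - x) * ∑ k ∈ range (n + 1),
            hypergeomCoeff n (a + 1) (s + 1) k * (k * x ^ (k - 1)) := by
  set c := hypergeomCoeff n (a + 1) (s + 1) with hc
  have hpow (k : ℕ) : (k : ℝ) * x ^ (k - 1) * x = k * x ^ k := by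
    cases k <;> simp [pow_succ, mul_assoc]
  have hshift : ∑ k ∈ range (n + 1), ((a : ℝ) + 1 + k) * c k * x ^ k
      = ∑ k ∈ range (n + 1), ((a : ℝ) + 2 + k) * c (k + 1) * x ^ (k + 1) + (a + 1) := by
    have hlast : c (n + 1) = 0 := hypergeomCoeff_of_lt (Nat.lt_succ_self n) _ _
    have h := sum_range_succ (fun k : ℕ => ((a : ℝ) + 1 + k) * c k * x ^ k) (n + 1)
    rw [sum_range_succ', hlast, hc, hypergeomCoeff_zero, ← hc] at h
    simp only [mul_zero, zero_mul, add_zero, Nat.cast_zero, pow_zero, mul_one] at h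
    rw [← h]
    congr 1
    refine sum_congr rfl fun k _ => ?_
    push_cast
    ring
  have hexpand : (a + 1 - (s - n) * x) * hypergeomSum n (a + 1) (s + 1) x
        + x * (1 - x) * ∑ k ∈ range (n + 1), c k * (k * x ^ (k - 1))
      = ∑ k ∈ range (n + 1), ((a : ℝ) + 1 + k) * c k * x ^ k
        - ∑ k ∈ range (n + 1), (s - n + k) * c k * x ^ (k + 1) := by
    rw [hypergeomSum, mul_sum, mul_sum, ← sum_add_distrib, ← sum_sub_distrib]
    refine sum_congr rfl fun k _ => ?_
    rw [← hc]
    linear_combination (1 - x) * c k * hpow k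
  rw [hexpand, hshift, hypergeomSum, sum_range_succ', hypergeomCoeff_zero, mul_add, mul_sum,
    add_sub_right_comm, ← sum_sub_distrib]
  congr 1
  · refine sum_congr rfl fun k _ => ?_
    linear_combination x ^ (k + 1) * hypergeomCoeff_succ n a s k
  · simp

/-- Rodrigues-type formula for an arbitrary integer exponent of `1 - x`. -/
theorem iteratedDeriv_pow_mul_one_sub_zpow (n a : ℕ) (q : ℤ) {x : ℝ} (hx : x < 1) :
    iteratedDeriv n (fun y : ℝ => y ^ (a + n) * (1 - y) ^ (q + n)) x
      = ((n + a).factorial : ℝ) / (a.factorial : ℝ) * x ^ a * (1 - x) ^ q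
        * hypergeomSum n a (a + q + n + 1) x := by
  induction n generalizing a q x with
  | zero =>
    have : (a.factorial : ℝ) ≠ 0 := by positivity
    simp [hypergeomSum, hypergeomCoeff_zero, this]
  | succ n ih =>
    have hx' : 1 - x ≠ 0 := (sub_pos.mpr hx).ne'
    have hfun : (fun y : ℝ => y ^ (a + (n + 1)) * (1 - y) ^ (q + ((n + 1 : ℕ) : ℤ)))
        = fun y : ℝ => y ^ (a + 1 + n) * (1 - y) ^ (q + 1 + n) := by
      funext y
      congr 2 <;> push_cast <;> ring
    have hs : ((a + 1 : ℕ) : ℝ) + ((q + 1 : ℤ) : ℝ) + n + 1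
        = ((a : ℝ) + q + ((n + 1 : ℕ) : ℝ) + 1) + 1 := by
      push_cast
      ring
    have heq : iteratedDeriv n (fun y : ℝ => y ^ (a + 1 + n) * (1 - y) ^ (q + 1 + n))
        =ᶠ[nhds x] fun y => ((n + (a + 1)).factorial : ℝ) / ((a + 1).factorial : ℝ) * y ^ (a + 1)
          * (1 - y) ^ (q + 1) * hypergeomSum n (a + 1) (a + q + ((n + 1 : ℕ) : ℝ) + 1 + 1) y := by
      filter_upwards [Iio_mem_nhds hx] with y hy
      rw [ih (a + 1) (q + 1) hy, hs]
    have hzpow : HasDerivAt (fun y : ℝ => (1 - y) ^ (q + 1)) (-((q + 1) * (1 - x) ^ q)) x := by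
      have h := (hasDerivAt_zpow (q + 1) (1 - x) (Or.inl hx')).comp x
        ((hasDerivAt_id x).const_sub 1)
      simpa [Function.comp_def] using h
    have hderiv := ((((hasDerivAt_pow (a + 1) x).const_mul
      (((n + (a + 1)).factorial : ℝ) / ((a + 1).factorial : ℝ))).fun_mul hzpow).fun_mul
      (hasDerivAt_hypergeomSum n (a + 1) (a + q + ((n + 1 : ℕ) : ℝ) + 1 + 1) x))
    rw [hfun, iteratedDeriv_succ, heq.deriv_eq, hderiv.deriv]
    have hfact : ((n + (a + 1)).factorial : ℝ) / ((a + 1).factorial : ℝ) * (a + 1)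
        = ((n + 1 + a).factorial : ℝ) / (a.factorial : ℝ) := by
      rw [Nat.factorial_succ a, show n + (a + 1) = n + 1 + a by ring]
      push_cast
      field_simp
    rw [← hfact, zpow_add_one₀ hx', Nat.add_sub_cancel]
    have hrec := hypergeomSum_succ n a (a + q + ((n + 1 : ℕ) : ℝ) + 1) x
    push_cast at hrec ⊢
    linear_combination (-((n + (a + 1)).factorial : ℝ) / ((a + 1).factorial : ℝ) * x ^ a
      * (1 - x) ^ q) * hrec

/-- Jacobi's formula in hypergeometric form: for `0 ≤ j ≤ 2B+2m` and `0 < t < 1`,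
`(d/dt)^m [t^{j+m}(1−t)^{2B+m−j}]
  = ((m+j)!/j!) t^j (1−t)^{2B−j} ∑_{k=0}^{m} (−1)^k C(m,k) ((2B+m+1)_k/(j+1)_k) t^k`,
where `(a)_k` is the rising factorial and the powers of `1−t` are integer powers. -/
theorem iteratedDeriv_hypergeom (B m j : ℕ) (hj : j ≤ 2 * B + 2 * m) (t : ℝ)
    (h0 : 0 < t) (h1 : t < 1) :
    iteratedDeriv m (fun s : ℝ => s ^ (j + m) * (1 - s) ^ ((2 * B + m : ℤ) - (j : ℤ))) t
      = ((m + j).factorial : ℝ) / (j.factorial : ℝ) * t ^ j * (1 - t) ^ ((2 * B : ℤ) - (j : ℤ))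
        * ∑ k ∈ Finset.range (m + 1),
            (-1 : ℝ) ^ k * (m.choose k : ℝ)
              * ((∏ i ∈ Finset.range k, ((2 * B + m + 1 : ℝ) + i))
                  / (∏ i ∈ Finset.range k, ((j : ℝ) + 1 + i)))
              * t ^ k := by
  have hexp : (2 * B + m : ℤ) - j = (2 * B - j) + m := by ring
  have hs : (j : ℝ) + ((2 * B - j : ℤ) : ℝ) + m + 1 = 2 * B + m + 1 := by
    push_cast
    ring
  rw [hexp, iteratedDeriv_pow_mul_one_sub_zpow m j (2 * B - j) h1, hs]
  rfl
end
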